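/- Let n_1 ∈ ℤ² be fixed and let m ∈ ℤ be fixed. Let N, N_2 ≥ 1. Then for any ε > 0, the number of pairs (n, n_2) ∈ (ℤ²)² such that n lies in a ball of radius N, n_2 lies in a ball of radius N_2, n - n_1 + n_2 = 0, and |n|² - |n_1|² + |n_2|² = m, is O(max{N^ε, N_2^ε}), with constant depending only on ε. -/

import Mathlib

/-- `k` lies in the (closed) ball of radius `R` centered at `c ∈ ℝ²`. -/
def inBall (k : ℤ × ℤ) (c : ℝ × ℝ) (R : ℝ) : Prop :=
  ((k.1 : ℝ) - c.1) ^ 2 + ((k.2 : ℝ) - c.2) ^ 2 ≤ R ^ 2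

/-- The squared Euclidean norm of a lattice point. -/
def sqNorm (k : ℤ × ℤ) : ℤ := k.1 ^ 2 + k.2 ^ 2

/-- The number of submultisets of `s` is at most `C (ν s.prod) ^ δ`, when `ν` is a multiplicative
size function with finite sublevel sets. -/
lemma Multiset.exists_card_Iic_le_mul_rpow {M : Type*} [CommMonoid M] [DecidableEq M]
    (ν : M →* ℕ) (hν : ∀ B : ℕ, {x | ν x ≤ B}.Finite) {δ : ℝ} (hδ : 0 < δ) :
    ∃ C : ℝ, 0 < C ∧ ∀ s : Multiset M, (∀ x ∈ s, 2 ≤ ν x) →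
      ((Finset.Iic s).card : ℝ) ≤ C * (ν s.prod : ℝ) ^ δ := by
  have hlog : 0 < Real.log 2 := Real.log_pos one_lt_two
  set K : ℝ := max 1 (1 / (δ * Real.log 2))
  have hK1 : 1 ≤ K := le_max_left _ _
  have hKδ : 1 ≤ K * (δ * Real.log 2) := by
    rw [← div_le_iff₀ (by positivity)]
    exact le_max_right _ _
  set B : ℕ := ⌈(2 : ℝ) ^ (1 / δ)⌉₊
  have hsmall (a : ℕ) (q : ℝ) (hq : 2 ≤ q) : (a + 1 : ℝ) ≤ K * (q ^ a) ^ δ := by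
    have hq0 : 0 < q := by linarith
    have h1 : (a : ℝ) * (δ * Real.log 2) + 1 ≤ (q ^ a) ^ δ := by
      calc (a : ℝ) * (δ * Real.log 2) + 1
          ≤ a * (δ * Real.log q) + 1 := by gcongr
        _ ≤ Real.exp (a * (δ * Real.log q)) := Real.add_one_le_exp _
        _ = (q ^ a) ^ δ := by
          rw [Real.rpow_def_of_pos (by positivity), Real.log_pow]
          ring_nf
    have ha : (0 : ℝ) ≤ a := a.cast_nonneg
    calc (a + 1 : ℝ) ≤ a * (K * (δ * Real.log 2)) + K :=
          add_le_add (le_mul_of_one_le_right ha hKδ) hK1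
      _ = K * (a * (δ * Real.log 2) + 1) := by ring
      _ ≤ _ := by gcongr
  have hlarge (a : ℕ) (q : ℝ) (hq : (B : ℝ) ≤ q) : (a + 1 : ℝ) ≤ (q ^ a) ^ δ := by
    have h2 : (2 : ℝ) ≤ q ^ δ := by
      have : (2 : ℝ) ^ (1 / δ) ≤ q := (Nat.le_ceil _).trans hq
      calc (2 : ℝ) = ((2 : ℝ) ^ (1 / δ)) ^ δ := by
            rw [← Real.rpow_mul (by norm_num), one_div_mul_cancel hδ.ne', Real.rpow_one]
        _ ≤ q ^ δ := by gcongr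
    have hq0 : 0 ≤ q := le_trans B.cast_nonneg hq
    calc (a + 1 : ℝ) ≤ 2 ^ a := by exact_mod_cast Nat.lt_two_pow_self
      _ ≤ (q ^ δ) ^ a := by gcongr
      _ = (q ^ a) ^ δ := by
        rw [← Real.rpow_natCast, ← Real.rpow_mul hq0, mul_comm, Real.rpow_mul hq0,
          Real.rpow_natCast]
  set S : Finset M := (hν B).toFinset
  refine ⟨K ^ S.card, by positivity, fun s hs => ?_⟩
  have hprod : (ν s.prod : ℝ) = ∏ x ∈ s.toFinset, (ν x : ℝ) ^ s.count x := by
    rw [Finset.prod_multiset_count, map_prod]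
    push_cast [map_pow]
    rfl
  rw [Multiset.card_Iic, hprod, ← Real.finsetProd_rpow _ _ (fun _ _ => by positivity)]
  push_cast
  calc ∏ x ∈ s.toFinset, ((s.count x : ℝ) + 1)
      ≤ ∏ x ∈ s.toFinset, ((if x ∈ S then K else 1) * ((ν x : ℝ) ^ s.count x) ^ δ) := by
        refine Finset.prod_le_prod (fun _ _ => by positivity) fun x hx => ?_
        split_ifs with hxS
        · exact hsmall _ _ (by exact_mod_cast hs x (Multiset.mem_toFinset.1 hx))
        · rw [one_mul]
          refine hlarge _ _ ?_
          have : B < ν x := by simpa [S] using hxS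
          exact_mod_cast this.le
    _ ≤ _ := by
        rw [Finset.prod_mul_distrib, Finset.prod_ite_mem, Finset.prod_const]
        have : (s.toFinset ∩ S).card ≤ S.card := Finset.card_le_card Finset.inter_subset_right
        gcongr

/-- There are finitely many Gaussian integers of bounded norm. -/
lemma GaussianInt.finite_natAbs_norm_le (B : ℕ) :
    {z : GaussianInt | z.norm.natAbs ≤ B}.Finite := by
  refine (((Set.finite_Icc (-(B : ℤ)) B).prod (Set.finite_Icc (-(B : ℤ)) B)).image
    fun p => (⟨p.1, p.2⟩ : GaussianInt)).subset fun z hz => ?_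
  have hz' : z.re * z.re + z.im * z.im ≤ B := by
    have h : (z.norm.natAbs : ℤ) ≤ B := by exact_mod_cast hz
    rw [GaussianInt.abs_natCast_norm, Zsqrtd.norm_def] at h
    linarith
  refine ⟨(z.re, z.im), ?_, rfl⟩
  simp only [Set.mem_prod, Set.mem_Icc]
  refine ⟨⟨?_, ?_⟩, ?_, ?_⟩ <;> nlinarith [mul_self_nonneg z.re, mul_self_nonneg z.im]

/-- The number of divisors of a nonzero Gaussian integer `z` is `O(N(z) ^ δ)`. -/
lemma GaussianInt.exists_ncard_dvd_le_mul_rpow {δ : ℝ} (hδ : 0 < δ) :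
    ∃ C : ℝ, 0 < C ∧ ∀ z : GaussianInt, z ≠ 0 → {w | w ∣ z}.Finite ∧
      ({w | w ∣ z}.ncard : ℝ) ≤ C * (z.norm.natAbs : ℝ) ^ δ := by
  classical
  let _ : NormalizationMonoid GaussianInt :=
    UniqueFactorizationMonoid.strongNormalizationMonoid.toNormalizationMonoid
  let ν : GaussianInt →* ℕ := (Int.natAbsHom : ℤ →* ℕ).comp Zsqrtd.normMonoidHom
  have hν (z : GaussianInt) : ν z = z.norm.natAbs := rfl
  obtain ⟨C, hC, h⟩ :=
    Multiset.exists_card_Iic_le_mul_rpow ν GaussianInt.finite_natAbs_norm_le hδ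
  set U := (GaussianInt.finite_natAbs_norm_le 1).toFinset with hU
  refine ⟨C * (U.card + 1), by positivity, fun z hz => ?_⟩
  set s := UniqueFactorizationMonoid.normalizedFactors z
  have hsub : {w | w ∣ z} ⊆ ((Finset.Iic s ×ˢ U).image fun p => p.1.prod * p.2 : Finset _) := by
    intro w hw
    have hw0 : w ≠ 0 := ne_zero_of_dvd_ne_zero hz hw
    obtain ⟨u, hu⟩ := UniqueFactorizationMonoid.prod_normalizedFactors hw0
    simp only [Finset.coe_image, Set.mem_image, Finset.mem_coe, Finset.mem_product,
      Finset.mem_Iic, Prod.exists]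
    refine ⟨_, u, ⟨(UniqueFactorizationMonoid.dvd_iff_normalizedFactors_le_normalizedFactors
      hw0 hz).1 hw, ?_⟩, hu⟩
    simp [hU, Zsqrtd.norm_eq_one_iff.2 u.isUnit]
  refine ⟨(Finset.finite_toSet _).subset hsub, ?_⟩
  have hcard : {w | w ∣ z}.ncard ≤ (Finset.Iic s).card * U.card := by
    refine (Set.ncard_le_ncard hsub (Finset.finite_toSet _)).trans ?_
    rw [Set.ncard_coe_finset, ← Finset.card_product]
    exact Finset.card_image_le
  have hs2 : ∀ x ∈ s, 2 ≤ ν x := by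
    intro x hx
    have hx' := UniqueFactorizationMonoid.prime_of_normalized_factor x hx
    have h0 : ν x ≠ 0 := by
      rw [hν, Int.natAbs_ne_zero, Ne, GaussianInt.norm_eq_zero]
      exact hx'.ne_zero
    have h1 : ν x ≠ 1 := fun h1 => hx'.not_isUnit (Zsqrtd.norm_eq_one_iff.1 h1)
    omega
  have hνs : ν s.prod = z.norm.natAbs := by
    rw [hν, Zsqrtd.norm_eq_of_associated (by norm_num)
      (UniqueFactorizationMonoid.prod_normalizedFactors hz)]
  calc ({w | w ∣ z}.ncard : ℝ) ≤ (Finset.Iic s).card * U.card := by exact_mod_cast hcard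
    _ ≤ (C * (ν s.prod : ℝ) ^ δ) * (U.card + 1) := by
        gcongr
        · exact h s hs2
        · linarith
    _ = _ := by rw [hνs]; ring

/-- The number of lattice points on the circle `|k|² = R` is `O(R ^ δ)`. -/
lemma exists_ncard_sqNorm_eq_le_mul_rpow {δ : ℝ} (hδ : 0 < δ) :
    ∃ C : ℝ, 0 < C ∧ ∀ R : ℤ, 0 < R → {k | sqNorm k = R}.Finite ∧
      ({k | sqNorm k = R}.ncard : ℝ) ≤ C * (R : ℝ) ^ δ := by
  obtain ⟨C, hC, h⟩ := GaussianInt.exists_ncard_dvd_le_mul_rpow (half_pos hδ)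
  refine ⟨C, hC, fun R hR => ?_⟩
  obtain ⟨hfin, hle⟩ := h (R : GaussianInt) (by exact_mod_cast hR.ne')
  let f : ℤ × ℤ → GaussianInt := fun k => ⟨k.1, k.2⟩
  have hf : Function.Injective f := fun a b hab => by
    simpa [f, Zsqrtd.ext_iff, Prod.ext_iff] using hab
  have hmaps : ∀ k ∈ {k | sqNorm k = R}, f k ∈ {w | w ∣ (R : GaussianInt)} := by
    intro k hk
    have : (f k).norm = R := by
      rw [← show sqNorm k = R from hk, Zsqrtd.norm_def, sqNorm]
      simp only [f]
      ring
    exact ⟨star (f k), by rw [← Zsqrtd.norm_eq_mul_conj, this]⟩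
  refine ⟨hfin.of_injOn hmaps hf.injOn, ?_⟩
  have hR' : (0 : ℝ) < R := by exact_mod_cast hR
  calc ({k | sqNorm k = R}.ncard : ℝ) ≤ ({w | w ∣ (R : GaussianInt)}.ncard : ℝ) := by
        exact_mod_cast Set.ncard_le_ncard_of_injOn f hmaps hf.injOn hfin
    _ ≤ _ := hle
    _ = C * (R : ℝ) ^ δ := by
        rw [Zsqrtd.norm_intCast, Nat.cast_natAbs, abs_of_nonneg (by positivity)]
        push_cast
        rw [← pow_two, ← Real.rpow_natCast, ← Real.rpow_mul hR'.le]
        congr 2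
        push_cast
        ring

/-- Three distinct lattice points on the circle `|k|² = R` span a triangle of area at least `1 / 2`,
so the product of its squared side lengths is at least `4 R`. -/
lemma four_mul_le_sqNorm_sub_mul {R : ℤ} {a b c : ℤ × ℤ} (hR : 0 < R)
    (ha : sqNorm a = R) (hb : sqNorm b = R) (hc : sqNorm c = R)
    (hab : a ≠ b) (hac : a ≠ c) (hbc : b ≠ c) :
    4 * R ≤ sqNorm (a - b) * sqNorm (a - c) * sqNorm (b - c) := by
  have hpos {x y : ℤ × ℤ} (hxy : x ≠ y) : 0 < sqNorm (x - y) := by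
    have h0 : x.1 - y.1 ≠ 0 ∨ x.2 - y.2 ≠ 0 := by
      by_contra! h
      exact hxy (Prod.ext (by linarith [h.1]) (by linarith [h.2]))
    simp only [sqNorm, Prod.fst_sub, Prod.snd_sub]
    rcases h0 with h0 | h0 <;> positivity
  obtain ⟨a₁, a₂⟩ := a
  obtain ⟨b₁, b₂⟩ := b
  obtain ⟨c₁, c₂⟩ := c
  have hp := mul_pos (mul_pos (hpos hab) (hpos hac)) (hpos hbc)
  have key : sqNorm ((a₁, a₂) - (b₁, b₂)) * sqNorm ((a₁, a₂) - (c₁, c₂)) *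
      sqNorm ((b₁, b₂) - (c₁, c₂)) =
      4 * R * ((b₁ - a₁) * (c₂ - a₂) - (b₂ - a₂) * (c₁ - a₁)) ^ 2 := by
    simp only [sqNorm, Prod.mk_sub_mk] at ha hb hc ⊢
    obtain ⟨x, hx⟩ : ∃ x, x = a₁ * b₁ + a₂ * b₂ := ⟨_, rfl⟩
    obtain ⟨y, hy⟩ : ∃ y, y = b₁ * c₁ + b₂ * c₂ := ⟨_, rfl⟩
    obtain ⟨z, hz⟩ : ∃ z, z = a₁ * c₁ + a₂ * c₂ := ⟨_, rfl⟩
    have gram : R ^ 3 + 2 * x * y * z - R * (x ^ 2 + y ^ 2 + z ^ 2) = 0 := by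
      have : (a₁ ^ 2 + a₂ ^ 2) * (b₁ ^ 2 + b₂ ^ 2) * (c₁ ^ 2 + c₂ ^ 2) + 2 * x * y * z
          - (a₁ ^ 2 + a₂ ^ 2) * y ^ 2 - (b₁ ^ 2 + b₂ ^ 2) * z ^ 2
          - (c₁ ^ 2 + c₂ ^ 2) * x ^ 2 = 0 := by
        rw [hx, hy, hz]; ring
      rw [ha, hb, hc] at this
      linear_combination this
    have e₁ : (a₁ - b₁) ^ 2 + (a₂ - b₂) ^ 2 = 2 * (R - x) := by linear_combination ha + hb + 2 * hx
    have e₂ : (a₁ - c₁) ^ 2 + (a₂ - c₂) ^ 2 = 2 * (R - z) := by linear_combination ha + hc + 2 * hz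
    have e₃ : (b₁ - c₁) ^ 2 + (b₂ - c₂) ^ 2 = 2 * (R - y) := by linear_combination hb + hc + 2 * hy
    have e₄ : (b₁ - a₁) * (c₁ - a₁) + (b₂ - a₂) * (c₂ - a₂) = R + y - x - z := by
      linear_combination ha - hy + hx + hz
    have e₅ : ((b₁ - a₁) * (c₂ - a₂) - (b₂ - a₂) * (c₁ - a₁)) ^ 2 =
        4 * (R - x) * (R - z) - (R + y - x - z) ^ 2 := by
      rw [← e₄]
      have : ((b₁ - a₁) * (c₂ - a₂) - (b₂ - a₂) * (c₁ - a₁)) ^ 2 =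
        ((a₁ - b₁) ^ 2 + (a₂ - b₂) ^ 2) * ((a₁ - c₁) ^ 2 + (a₂ - c₂) ^ 2) -
          ((b₁ - a₁) * (c₁ - a₁) + (b₂ - a₂) * (c₂ - a₂)) ^ 2 := by ring
      rw [this, e₁, e₂]
      ring
    rw [e₁, e₂, e₃, e₅]
    linear_combination (-4) * gram
  rw [key] at hp ⊢
  have hD := pos_of_mul_pos_right hp (by positivity)
  nlinarith

/-- Two lattice points in a ball of radius `N` have squared distance at most `4 N²`. -/
lemma inBall.sqNorm_sub_le {a b : ℤ × ℤ} {c : ℝ × ℝ} {N : ℝ} (ha : inBall a c N)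
    (hb : inBall b c N) : (sqNorm (a - b) : ℝ) ≤ 4 * N ^ 2 := by
  simp only [inBall, sqNorm, Prod.fst_sub, Prod.snd_sub] at *
  push_cast
  nlinarith [sq_nonneg ((a.1 - c.1 : ℝ) + (b.1 - c.1)), sq_nonneg ((a.2 - c.2 : ℝ) + (b.2 - c.2))]

/-- counting pairs `(n, n₂)` with `n₁` fixed. -/
theorem count_pairs_fixed_n₁ (ε : ℝ) (hε : 0 < ε) :
    ∃ C : ℝ, 0 < C ∧ ∀ (n₁ : ℤ × ℤ) (m : ℤ) (N N₂ : ℝ), 1 ≤ N → 1 ≤ N₂ →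
      ∀ c c₂ : ℝ × ℝ,
      (({p : (ℤ × ℤ) × (ℤ × ℤ) |
          inBall p.1 c N ∧ inBall p.2 c₂ N₂ ∧ p.1 - n₁ + p.2 = 0 ∧
            sqNorm p.1 - sqNorm n₁ + sqNorm p.2 = m}.ncard : ℝ))
        ≤ C * max (N ^ ε) (N₂ ^ ε) := by
  obtain ⟨C, hC, h⟩ := exists_ncard_sqNorm_eq_le_mul_rpow (δ := ε / 6) (by positivity)
  refine ⟨C * 1024 ^ (ε / 6) + 2, by positivity, fun n₁ m N N₂ hN _ c c₂ => ?_⟩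
  set S := {p : (ℤ × ℤ) × (ℤ × ℤ) | inBall p.1 c N ∧ inBall p.2 c₂ N₂ ∧ p.1 - n₁ + p.2 = 0 ∧
    sqNorm p.1 - sqNorm n₁ + sqNorm p.2 = m}
  set R := 2 * m + sqNorm n₁ with hR
  let f : (ℤ × ℤ) × (ℤ × ℤ) → ℤ × ℤ := fun p => p.1 - p.2
  have hsnd : ∀ p ∈ S, p.2 = n₁ - p.1 := fun p hp => by
    linear_combination hp.2.2.1
  have hinj : S.InjOn f := by
    intro p hp q hq hpq
    have h₁ := hsnd p hp
    have h₂ := hsnd q hq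
    simp only [f, h₁, h₂, Prod.ext_iff, Prod.fst_sub, Prod.snd_sub] at hpq
    have : p.1 = q.1 := Prod.ext (by omega) (by omega)
    exact Prod.ext this (by rw [h₁, h₂, this])
  have hmaps : ∀ p ∈ S, f p ∈ {k | sqNorm k = R} := by
    intro p hp
    have hm := hp.2.2.2
    simp only [Set.mem_ofPred_eq, f, hR, ← hm, hsnd p hp, sqNorm, Prod.fst_sub, Prod.snd_sub]
    ring
  have hdist : ∀ p ∈ S, ∀ q ∈ S, (sqNorm (f p - f q) : ℝ) ≤ 16 * N ^ 2 := by
    intro p hp q hq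
    have h₁ := hp.1.sqNorm_sub_le hq.1
    have h₂ : sqNorm (f p - f q) = 4 * sqNorm (p.1 - q.1) := by
      simp only [f, hsnd p hp, hsnd q hq, sqNorm, Prod.fst_sub, Prod.snd_sub]
      ring
    rw [h₂]
    push_cast
    linarith
  have hone : 1 ≤ N ^ ε := Real.one_le_rpow hN hε.le
  have hmax : N ^ ε ≤ max (N ^ ε) (N₂ ^ ε) := le_max_left _ _
  refine le_trans ?_ (mul_le_mul_of_nonneg_left hmax (by positivity))
  have hC' : 0 < C * (1024 : ℝ) ^ (ε / 6) := by positivity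
  suffices hcases : (S.ncard : ℝ) ≤ C * 1024 ^ (ε / 6) * N ^ ε ∨ S.ncard ≤ 2 by
    rcases hcases with hle | hle
    · linarith
    · have : (S.ncard : ℝ) ≤ 2 := by exact_mod_cast hle
      nlinarith
  rcases le_or_gt R 0 with hR0 | hR0
  · right
    have hsub : S.Subsingleton := fun p hp q hq => by
      have hzero : ∀ r ∈ S, f r = 0 := fun r hr => by
        have hr' : sqNorm (f r) ≤ 0 := (hmaps r hr).trans_le hR0
        rw [sqNorm] at hr'
        exact Prod.ext (by simp only [Prod.fst_zero]; nlinarith)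
          (by simp only [Prod.snd_zero]; nlinarith)
      exact hinj hp hq ((hzero p hp).trans (hzero q hq).symm)
    have := Set.ncard_le_one hsub.finite |>.2 hsub
    omega
  obtain ⟨hfin, hle⟩ := h R hR0
  have hSfin : S.Finite := hfin.of_injOn hmaps hinj
  rcases le_or_gt (R : ℝ) (1024 * N ^ 6) with hRN | hRN
  · left
    have hR0' : (0 : ℝ) ≤ R := by exact_mod_cast hR0.le
    calc (S.ncard : ℝ) ≤ ({k | sqNorm k = R}.ncard : ℝ) := by
          exact_mod_cast Set.ncard_le_ncard_of_injOn f hmaps hinj hfin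
      _ ≤ C * (R : ℝ) ^ (ε / 6) := hle
      _ ≤ C * (1024 * N ^ 6) ^ (ε / 6) := by gcongr
      _ = C * 1024 ^ (ε / 6) * N ^ ε := by
        rw [Real.mul_rpow (by norm_num) (by positivity), ← Real.rpow_natCast N,
          ← Real.rpow_mul (by positivity), mul_assoc]
        congr 3
        push_cast
        ring
  · right
    by_contra! hlt
    obtain ⟨p, q, r, hp, hq, hr, hpq, hpr, hqr⟩ := (Set.two_lt_ncard_iff hSfin).1 hlt
    have h4 := four_mul_le_sqNorm_sub_mul hR0 (hmaps p hp) (hmaps q hq) (hmaps r hr)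
      (hinj.ne hp hq hpq) (hinj.ne hp hr hpr) (hinj.ne hq hr hqr)
    have h4' : 4 * (R : ℝ) ≤
        sqNorm (f p - f q) * sqNorm (f p - f r) * sqNorm (f q - f r) := by exact_mod_cast h4
    have hnonneg (k : ℤ × ℤ) : (0 : ℝ) ≤ sqNorm k := by
      rw [sqNorm]; positivity
    have : (sqNorm (f p - f q) * sqNorm (f p - f r) * sqNorm (f q - f r) : ℝ) ≤
        16 * N ^ 2 * (16 * N ^ 2) * (16 * N ^ 2) := by
      have h₁ := hdist p hp q hq
      have h₂ := hdist p hp r hr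
      have h₃ := hdist q hq r hr
      have := hnonneg (f p - f r)
      have := hnonneg (f q - f r)
      gcongr
    nlinarith
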